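/- Let μ and ν be probability measures on ℝ^d and let y > 0. Then ‖ μ * ν * (∂n_y/∂y) ‖₁ ≤ 2 ∫_{y/2}^∞ ‖ μ * (∂n_v/∂v) ‖₁ · ‖ ν * (∂n_v/∂v) ‖₁ dv. -/

import Mathlib

open MeasureTheory Real
/-- Density of the centered Gaussian on `ℝ^d` with covariance matrix `y • I`. -/
noncomputable def gaussD (d : ℕ) (y : ℝ) (x : EuclideanSpace ℝ (Fin d)) : ℝ :=
  (2 * Real.pi * y) ^ (-(d : ℝ) / 2) * Real.exp (-‖x‖ ^ 2 / (2 * y))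

/-- `∂/∂y n_y (x)`. -/
noncomputable def gaussDy (d : ℕ) (y : ℝ) (x : EuclideanSpace ℝ (Fin d)) : ℝ :=
  deriv (fun u => gaussD d u x) y

open Filter Topology

/-- explicit derivative -/
noncomputable def gE (d : ℕ) (y : ℝ) (x : EuclideanSpace ℝ (Fin d)) : ℝ :=
  gaussD d y x * (‖x‖ ^ 2 / (2 * y ^ 2) - d / (2 * y))

noncomputable def cC (d : ℕ) : ℝ := 2 ^ ((d : ℝ) / 2) * (2 + d / 2)

noncomputable def sB (d : ℕ) (v : ℝ) : ℝ := cC d / v * (2 * Real.pi * (2 * v)) ^ (-(d : ℝ) / 2)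

lemma cC_nonneg (d : ℕ) : 0 ≤ cC d := by unfold cC; positivity

lemma hasDerivAt_gaussD (d : ℕ) {y : ℝ} (hy : 0 < y) (x : EuclideanSpace ℝ (Fin d)) :
    HasDerivAt (fun u => gaussD d u x) (gE d y x) y := by
  unfold gE gaussD
  have h1 : HasDerivAt (fun u : ℝ => 2 * Real.pi * u) (2 * Real.pi) y := by
    simpa using (hasDerivAt_id y).const_mul (2 * Real.pi)
  have hp : 0 < 2 * Real.pi * y := by positivity
  have h2 := h1.rpow_const (p := -(d : ℝ) / 2) (Or.inl hp.ne')
  have h3 : HasDerivAt (fun u : ℝ => -‖x‖ ^ 2 / (2 * u)) (‖x‖ ^ 2 / (2 * y ^ 2)) y := by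
    have := ((hasDerivAt_id y).const_mul 2).inv (by simp [hy.ne']) |>.const_mul (-‖x‖ ^ 2)
    refine (this.congr_deriv ?_).congr_of_eventuallyEq ?_
    · simp; field_simp
    · exact Eventually.of_forall fun u => by simp [div_eq_mul_inv]
  refine (h2.mul h3.exp).congr_deriv ?_
  rw [Real.rpow_sub_one hp.ne']
  field_simp
  ring

lemma gaussDy_eq (d : ℕ) {y : ℝ} (hy : 0 < y) (x : EuclideanSpace ℝ (Fin d)) :
    gaussDy d y x = gE d y x := (hasDerivAt_gaussD d hy x).deriv

lemma gaussD_nonneg (d : ℕ) {y : ℝ} (hy : 0 < y) (x : EuclideanSpace ℝ (Fin d)) :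
    0 ≤ gaussD d y x := by unfold gaussD; positivity

lemma gaussD_le (d : ℕ) {y : ℝ} (hy : 0 < y) (x : EuclideanSpace ℝ (Fin d)) :
    gaussD d y x ≤ (2 * Real.pi * y) ^ (-(d : ℝ) / 2) := by
  unfold gaussD
  apply mul_le_of_le_one_right (by positivity)
  rw [Real.exp_le_one_iff]
  apply div_nonpos_of_nonpos_of_nonneg _ (by positivity)
  simp

lemma measurable_gaussD (d : ℕ) :
    Measurable (fun p : ℝ × EuclideanSpace ℝ (Fin d) => gaussD d p.1 p.2) := by
  unfold gaussD; fun_prop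

lemma measurable_gE (d : ℕ) :
    Measurable (fun p : ℝ × EuclideanSpace ℝ (Fin d) => gE d p.1 p.2) := by
  unfold gE
  have := measurable_gaussD d
  fun_prop

lemma integral_gaussD (d : ℕ) {y : ℝ} (hy : 0 < y) :
    ∫ x, gaussD d y x = 1 := by
  unfold gaussD
  rw [integral_const_mul]
  have h := GaussianFourier.integral_rexp_neg_mul_sq_norm (V := EuclideanSpace ℝ (Fin d))
    (b := 1 / (2 * y)) (by positivity)
  have e : ∀ x : EuclideanSpace ℝ (Fin d),
      Real.exp (-‖x‖ ^ 2 / (2 * y)) = Real.exp (-(1 / (2 * y)) * ‖x‖ ^ 2) := by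
    intro x; congr 1; ring
  simp_rw [e]
  rw [h, finrank_euclideanSpace_fin, neg_div, Real.rpow_neg (by positivity)]
  have : Real.pi / (1 / (2 * y)) = 2 * Real.pi * y := by field_simp
  rw [this]
  exact inv_mul_cancel₀ (by positivity)

lemma integrable_gaussD (d : ℕ) {y : ℝ} (hy : 0 < y) :
    Integrable (fun x => gaussD d y x) := integrable_of_integral_eq_one (integral_gaussD d hy)

lemma gE_bound (d : ℕ) {v : ℝ} (hv : 0 < v) (x : EuclideanSpace ℝ (Fin d)) :
    |gE d v x| ≤ cC d / v * gaussD d (2 * v) x := by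
  set t := ‖x‖ ^ 2 / (4 * v) with ht
  have ht0 : 0 ≤ t := by positivity
  have h1 : t * Real.exp (-t) ≤ 1 := by
    rw [Real.exp_neg, ← div_eq_mul_inv, div_le_one (Real.exp_pos _)]
    linarith [Real.add_one_le_exp t]
  have h2 : Real.exp (-t) ≤ 1 := by simpa using ht0
  have hE : |‖x‖ ^ 2 / (2 * v ^ 2) - d / (2 * v)| ≤ (2 * t + d / 2) / v := by
    have e : (2 * t + d / 2) / v = ‖x‖ ^ 2 / (2 * v ^ 2) + d / (2 * v) := by
      rw [ht]; field_simp; ring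
    rw [e]
    refine (abs_sub _ _).trans ?_
    rw [abs_of_nonneg (by positivity), abs_of_nonneg (by positivity)]
  have hP : (2 * Real.pi * v) ^ (-(d : ℝ) / 2)
      = 2 ^ ((d : ℝ) / 2) * (2 * Real.pi * (2 * v)) ^ (-(d : ℝ) / 2) := by
    have : 2 * Real.pi * (2 * v) = 2 * (2 * Real.pi * v) := by ring
    rw [this, Real.mul_rpow (x := 2) (y := 2 * Real.pi * v) (by norm_num) (by positivity), ← mul_assoc,
      ← Real.rpow_add (by norm_num)]
    simp [neg_div]
  unfold gE
  rw [abs_mul, abs_of_nonneg (gaussD_nonneg d hv x)]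
  unfold gaussD cC
  have e1 : -‖x‖ ^ 2 / (2 * v) = -t + -t := by rw [ht]; field_simp; ring
  have e2 : -‖x‖ ^ 2 / (2 * (2 * v)) = -t := by rw [ht]; field_simp; ring
  rw [e1, e2, hP, Real.exp_add]
  set P := (2 * Real.pi * (2 * v)) ^ (-(d : ℝ) / 2)
  set Q := (2 : ℝ) ^ ((d : ℝ) / 2)
  have hPp : 0 ≤ P := by positivity
  have hQp : 0 ≤ Q := by positivity
  have hd : (0 : ℝ) ≤ d := by positivity
  have h3 : Real.exp (-t) * (2 * t + d / 2) ≤ 2 + d / 2 := by nlinarith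
  calc _ ≤ Q * P * (Real.exp (-t) * Real.exp (-t)) * ((2 * t + d / 2) / v) := by gcongr
    _ = Q * P * Real.exp (-t) / v * (Real.exp (-t) * (2 * t + d / 2)) := by ring
    _ ≤ Q * P * Real.exp (-t) / v * (2 + d / 2) := by gcongr
    _ = _ := by ring

lemma gE_le_sB (d : ℕ) {v : ℝ} (hv : 0 < v) (x : EuclideanSpace ℝ (Fin d)) :
    |gE d v x| ≤ sB d v := by
  refine (gE_bound d hv x).trans ?_
  unfold sB
  have := cC_nonneg d
  gcongr
  exact gaussD_le d (by positivity) x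

lemma sB_anti (d : ℕ) {u v : ℝ} (hu : 0 < u) (h : u ≤ v) : sB d v ≤ sB d u := by
  unfold sB
  have := cC_nonneg d
  have h2 : (2 * Real.pi * (2 * v)) ^ (-(d : ℝ) / 2) ≤ (2 * Real.pi * (2 * u)) ^ (-(d : ℝ) / 2) := by
    apply Real.rpow_le_rpow_of_nonpos (by positivity) (by gcongr)
    rw [neg_div]; simp; positivity
  have hv : 0 < v := hu.trans_le h
  gcongr

lemma measurable_gE_right (d : ℕ) (v : ℝ) : Measurable (gE d v) :=
  (measurable_gE d).comp measurable_prodMk_left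

lemma integrable_gE (d : ℕ) {v : ℝ} (hv : 0 < v) : Integrable (gE d v) := by
  refine ((integrable_gaussD d (y := 2 * v) (by positivity)).const_mul (cC d / v)).mono'
    (measurable_gE_right d v).aestronglyMeasurable (Eventually.of_forall fun x => gE_bound d hv x)

lemma lintegral_gE (d : ℕ) {v : ℝ} (hv : 0 < v) :
    ∫⁻ x, ‖gE d v x‖ₑ ≤ ENNReal.ofReal (cC d / v) := by
  have h := integral_gaussD d (y := 2 * v) (by positivity)
  calc ∫⁻ x, ‖gE d v x‖ₑ ≤ ∫⁻ x, ENNReal.ofReal (cC d / v * gaussD d (2 * v) x) := by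
        apply lintegral_mono
        intro x
        simp only
        rw [Real.enorm_eq_ofReal_abs]
        exact ENNReal.ofReal_le_ofReal (gE_bound d hv x)
    _ = ENNReal.ofReal (∫ x, cC d / v * gaussD d (2 * v) x) := by
        rw [ofReal_integral_eq_lintegral_ofReal]
        · exact (integrable_gaussD d (y := 2 * v) (by positivity)).const_mul _
        · exact Eventually.of_forall fun x =>
            mul_nonneg (div_nonneg (cC_nonneg d) hv.le) (gaussD_nonneg d (by positivity) x)
    _ = _ := by rw [integral_const_mul, h, mul_one]

lemma gaussD_mul (d : ℕ) {a b : ℝ} (ha : 0 < a) (hb : 0 < b) (x w : EuclideanSpace ℝ (Fin d)) :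
    gaussD d b w * gaussD d a (x - w) =
      gaussD d (a + b) x * gaussD d (a * b / (a + b)) (w - (b / (a + b)) • x) := by
  unfold gaussD
  have hab : 0 < a + b := by positivity
  rw [mul_mul_mul_comm, mul_mul_mul_comm ((2 * Real.pi * (a + b)) ^ (-(d : ℝ) / 2)), ← Real.mul_rpow (by positivity) (by positivity),
    ← Real.mul_rpow (by positivity) (by positivity), ← Real.exp_add, ← Real.exp_add]
  congr 2
  · field_simp
  · rw [norm_sub_sq_real, norm_sub_sq_real, norm_smul, inner_smul_right, real_inner_comm,
      Real.norm_of_nonneg (by positivity)]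
    field_simp
    ring

lemma gaussD_conv (d : ℕ) {a b : ℝ} (ha : 0 < a) (hb : 0 < b) (x : EuclideanSpace ℝ (Fin d)) :
    ∫ w, gaussD d b w * gaussD d a (x - w) = gaussD d (a + b) x := by
  simp_rw [gaussD_mul d ha hb]
  rw [integral_const_mul, integral_sub_right_eq_self (fun w => gaussD d (a * b / (a + b)) w),
    integral_gaussD d (by positivity), mul_one]

lemma hasDerivAt_param (d : ℕ) {φ : EuclideanSpace ℝ (Fin d) → ℝ} (hφ : Integrable φ)
    {ψ : EuclideanSpace ℝ (Fin d) → EuclideanSpace ℝ (Fin d)} (hψ : Measurable ψ)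
    {a : ℝ} (ha : 0 < a) :
    HasDerivAt (fun u => ∫ w, φ w * gaussD d u (ψ w)) (∫ w, φ w * gE d a (ψ w)) a := by
  have hs : Set.Ioi (a / 2) ∈ 𝓝 a := Ioi_mem_nhds (by linarith)
  have hm : ∀ u, AEStronglyMeasurable (fun w => gaussD d u (ψ w)) volume := fun u =>
    ((measurable_gaussD d).comp (measurable_const.prodMk hψ)).aestronglyMeasurable
  have hm' : ∀ u, AEStronglyMeasurable (fun w => gE d u (ψ w)) volume := fun u =>
    ((measurable_gE d).comp (measurable_const.prodMk hψ)).aestronglyMeasurable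
  refine (hasDerivAt_integral_of_dominated_loc_of_deriv_le
    (F := fun u w => φ w * gaussD d u (ψ w)) (F' := fun u w => φ w * gE d u (ψ w))
    (bound := fun w => ‖φ w‖ * sB d (a / 2)) hs ?_ ?_ ?_ ?_ ?_ ?_).2
  · exact Eventually.of_forall fun u => hφ.1.mul (hm u)
  · refine hφ.mul_bdd (c := (2 * Real.pi * a) ^ (-(d : ℝ) / 2)) (hm a) (Eventually.of_forall fun w => ?_)
    rw [Real.norm_of_nonneg (gaussD_nonneg d ha _)]
    exact gaussD_le d ha _
  · exact hφ.1.mul (hm' a)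
  · refine Eventually.of_forall fun w u hu => ?_
    have hu' : a / 2 < u := hu
    rw [norm_mul]
    gcongr
    exact (gE_le_sB d (by linarith) _).trans (sB_anti d (by positivity) hu'.le)
  · exact hφ.norm.mul_const _
  · refine Eventually.of_forall fun w u hu => ?_
    have hu' : a / 2 < u := hu
    exact (hasDerivAt_gaussD d (by linarith) _).const_mul _

lemma gE_conv (d : ℕ) {a b : ℝ} (ha : 0 < a) (hb : 0 < b) (x : EuclideanSpace ℝ (Fin d)) :
    gE d (a + b) x = ∫ w, gE d a (x - w) * gaussD d b w := by
  have h1 := hasDerivAt_param d (integrable_gaussD d hb) (ψ := fun w => x - w) (by fun_prop) ha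
  have h2 : HasDerivAt (fun u => gaussD d (u + b) x) (gE d (a + b) x) a :=
    (hasDerivAt_gaussD d (by positivity : 0 < a + b) x).comp_add_const a b
  have h3 : (fun u => ∫ w, gaussD d b w * gaussD d u (x - w)) =ᶠ[𝓝 a]
      fun u => gaussD d (u + b) x := by
    filter_upwards [Ioi_mem_nhds ha] with u hu
    exact gaussD_conv d hu hb x
  rw [h2.unique (h1.congr_of_eventuallyEq h3.symm)]
  simp_rw [mul_comm]

lemma hasDerivAt_gE (d : ℕ) {a b : ℝ} (ha : 0 < a) (hb : 0 < b) (x : EuclideanSpace ℝ (Fin d)) :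
    HasDerivAt (fun s => gE d s x) (∫ w, gE d a (x - w) * gE d b w) (a + b) := by
  have h1 := hasDerivAt_param d ((integrable_gE d ha).comp_sub_left x) (ψ := fun w => w)
    (by fun_prop) hb
  have h3 : (fun u => ∫ w, gE d a (x - w) * gaussD d u w) =ᶠ[𝓝 b] fun u => gE d (a + u) x := by
    filter_upwards [Ioi_mem_nhds hb] with u hu
    exact (gE_conv d ha hu x).symm
  have h4 := h1.congr_of_eventuallyEq h3.symm
  have h5 : HasDerivAt (fun s => s - a) 1 (a + b) := (hasDerivAt_id _).sub_const a
  have h6 : HasDerivAt (fun u => gE d (a + u) x) (∫ w, gE d a (x - w) * gE d b w) ((a + b) - a) := by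
    simpa using h4
  have := h6.comp (a + b) h5
  simpa [Function.comp_def] using this

lemma lintegral_gE_gE (d : ℕ) {v : ℝ} (hv : 0 < v) (x q : EuclideanSpace ℝ (Fin d)) :
    ∫⁻ w, ‖gE d v (x - w) * gE d v (w - q)‖ₑ ≤ ENNReal.ofReal (sB d v * (cC d / v)) := by
  have h0 : 0 ≤ sB d v := (abs_nonneg _).trans (gE_le_sB d hv 0)
  calc _ ≤ ∫⁻ w, ENNReal.ofReal (sB d v) * ‖gE d v (w - q)‖ₑ := by
        apply lintegral_mono
        intro w
        simp only [enorm_mul]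
        gcongr
        rw [Real.enorm_eq_ofReal_abs]
        exact ENNReal.ofReal_le_ofReal (gE_le_sB d hv _)
    _ = ENNReal.ofReal (sB d v) * ∫⁻ w, ‖gE d v w‖ₑ := by
        rw [lintegral_const_mul' _ _ ENNReal.ofReal_ne_top,
          lintegral_sub_right_eq_self (fun w => ‖gE d v w‖ₑ)]
    _ ≤ _ := by
        rw [ENNReal.ofReal_mul h0]
        gcongr
        exact lintegral_gE d hv

lemma lintegral_tail (C : ℝ) (hC : 0 ≤ C) {y : ℝ} (hy : 0 < y) :
    ∫⁻ v in Set.Ioi y, ENNReal.ofReal (C / v * (C / v)) < ⊤ := by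
  have h : IntegrableOn (fun v : ℝ => C * C * v ^ (-2 : ℝ)) (Set.Ioi y) :=
    (integrableOn_Ioi_rpow_of_lt (a := -2) (by norm_num) hy).const_mul (C * C)
  have h2 : IntegrableOn (fun v => C / v * (C / v)) (Set.Ioi y) := by
    refine h.congr_fun (fun v hv => ?_) measurableSet_Ioi
    have : 0 < v := hy.trans hv
    simp only
    rw [Real.rpow_neg this.le]
    norm_num
    field_simp
  exact h2.lintegral_lt_top

lemma lintegral_gE3 (d : ℕ) {y : ℝ} (hy : 0 < y) :
    ∃ M : ENNReal, M < ⊤ ∧ ∀ x q : EuclideanSpace ℝ (Fin d),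
      ∫⁻ v in Set.Ioi y, ∫⁻ w, ‖gE d v (x - w) * gE d v (w - q)‖ₑ ≤ M := by
  have hP : 0 ≤ (2 * Real.pi * (2 * y)) ^ (-(d : ℝ) / 2) := by positivity
  set P := (2 * Real.pi * (2 * y)) ^ (-(d : ℝ) / 2) with hPd
  refine ⟨ENNReal.ofReal P * ∫⁻ v in Set.Ioi y, ENNReal.ofReal (cC d / v * (cC d / v)),
    ENNReal.mul_lt_top ENNReal.ofReal_lt_top (lintegral_tail _ (cC_nonneg d) hy), fun x q => ?_⟩
  rw [← lintegral_const_mul' _ _ ENNReal.ofReal_ne_top]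
  apply setLIntegral_mono' measurableSet_Ioi
  intro v hv
  have hv' : y < v := hv
  have hv0 : 0 < v := hy.trans hv
  refine (lintegral_gE_gE d hv0 x q).trans ?_
  rw [← ENNReal.ofReal_mul hP]
  apply ENNReal.ofReal_le_ofReal
  have hc := cC_nonneg d
  have h2 : (2 * Real.pi * (2 * v)) ^ (-(d : ℝ) / 2) ≤ P := by
    apply Real.rpow_le_rpow_of_nonpos (by positivity) (by gcongr)
    rw [neg_div]; simp; positivity
  unfold sB
  calc _ ≤ cC d / v * P * (cC d / v) := by gcongr
    _ = _ := by ring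

lemma tendsto_gE (d : ℕ) (x : EuclideanSpace ℝ (Fin d)) :
    Tendsto (fun s => gE d (2 * s) x) atTop (𝓝 0) := by
  have hc : Tendsto (fun s : ℝ => sB d 1 * s⁻¹) atTop (𝓝 0) := by
    simpa using tendsto_inv_atTop_zero.const_mul (sB d 1)
  refine squeeze_zero_norm' ?_ hc
  filter_upwards [eventually_ge_atTop 1] with s hs
  refine (gE_le_sB d (by linarith) x).trans ?_
  have hcc := cC_nonneg d
  have h2 : (2 * Real.pi * (2 * (2 * s))) ^ (-(d : ℝ) / 2) ≤
      (2 * Real.pi * (2 * 1)) ^ (-(d : ℝ) / 2) := by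
    apply Real.rpow_le_rpow_of_nonpos (by positivity) (by gcongr; linarith)
    rw [neg_div]; simp; positivity
  unfold sB
  have h3 : cC d / (2 * s) ≤ cC d / 1 * s⁻¹ := by
    rw [div_one, ← div_eq_mul_inv]
    gcongr
    linarith
  calc _ ≤ cC d / 1 * s⁻¹ * (2 * Real.pi * (2 * 1)) ^ (-(d : ℝ) / 2) := by gcongr
    _ = _ := by ring

lemma measurable_quad (d : ℕ) (x : EuclideanSpace ℝ (Fin d)) :
    Measurable (fun p : (EuclideanSpace ℝ (Fin d) × EuclideanSpace ℝ (Fin d)) ×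
      (ℝ × EuclideanSpace ℝ (Fin d)) =>
      gE d p.2.1 (x - p.1.1 - p.2.2) * gE d p.2.1 (p.2.2 - p.1.2)) := by
  apply Measurable.mul
  · exact (measurable_gE d).comp (f := fun p : (EuclideanSpace ℝ (Fin d) × EuclideanSpace ℝ (Fin d)) ×
      (ℝ × EuclideanSpace ℝ (Fin d)) => (p.2.1, x - p.1.1 - p.2.2)) (by fun_prop)
  · exact (measurable_gE d).comp (f := fun p : (EuclideanSpace ℝ (Fin d) × EuclideanSpace ℝ (Fin d)) ×
      (ℝ × EuclideanSpace ℝ (Fin d)) => (p.2.1, p.2.2 - p.1.2)) (by fun_prop)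

lemma integrable_slice (d : ℕ) {y : ℝ} (hy : 0 < y) (x p q : EuclideanSpace ℝ (Fin d)) :
    Integrable (fun r : ℝ × EuclideanSpace ℝ (Fin d) =>
      gE d r.1 (x - p - r.2) * gE d r.1 (r.2 - q))
      ((volume.restrict (Set.Ioi y)).prod volume) := by
  have hm : Measurable (fun r : ℝ × EuclideanSpace ℝ (Fin d) =>
      gE d r.1 (x - p - r.2) * gE d r.1 (r.2 - q)) :=
    (measurable_quad d x).comp (measurable_prodMk_left (x := (p, q)))
  refine ⟨hm.aestronglyMeasurable, ?_⟩
  obtain ⟨M, hM, h⟩ := lintegral_gE3 d hy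
  unfold HasFiniteIntegral
  rw [lintegral_prod _ hm.enorm.aemeasurable]
  exact (h _ _).trans_lt hM

lemma key (d : ℕ) {y : ℝ} (hy : 0 < y) (x p q : EuclideanSpace ℝ (Fin d)) :
    gE d y (x - (p + q)) = -2 * ∫ r : ℝ × EuclideanSpace ℝ (Fin d),
      gE d r.1 (x - p - r.2) * gE d r.1 (r.2 - q)
      ∂((volume.restrict (Set.Ioi (y / 2))).prod volume) := by
  have hi := integrable_slice d (half_pos hy) x p q
  rw [integral_prod _ hi]
  have hi2 := hi.integral_prod_left
  simp only at hi2 ⊢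
  set G : ℝ → ℝ := fun v => ∫ w, gE d v (x - p - w) * gE d v (w - q) with hG
  have hGe : ∀ v, G v = ∫ w, gE d v (x - (p + q) - w) * gE d v w := by
    intro v
    rw [hG]
    simp only
    rw [← integral_sub_right_eq_self (fun w => gE d v (x - (p + q) - w) * gE d v w) q]
    congr 1
    ext w
    congr 2
    abel
  have hd : ∀ v ∈ Set.Ici (y / 2), HasDerivAt (fun s => gE d (2 * s) (x - (p + q))) (2 * G v) v := by
    intro v hv
    have hv0 : 0 < v := (half_pos hy).trans_le hv
    have h1 := hasDerivAt_gE d hv0 hv0 (x - (p + q))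
    rw [← hGe, ← two_mul] at h1
    have h2 : HasDerivAt (fun s : ℝ => 2 * s) 2 v := by
      simpa using (hasDerivAt_id v).const_mul 2
    have := h1.comp v h2
    rw [mul_comm] at this
    exact this
  have := integral_Ioi_of_hasDerivAt_of_tendsto' hd (hi2.const_mul 2) (tendsto_gE d _)
  rw [integral_const_mul] at this
  have e : 2 * (y / 2) = y := by ring
  rw [e] at this
  change _ = -2 * ∫ v in Set.Ioi (y / 2), G v
  linarith

lemma integrable_quad {d : ℕ} (μ ν : Measure (EuclideanSpace ℝ (Fin d)))
    [IsProbabilityMeasure μ] [IsProbabilityMeasure ν] {y : ℝ} (hy : 0 < y)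
    (x : EuclideanSpace ℝ (Fin d)) :
    Integrable (fun p : (EuclideanSpace ℝ (Fin d) × EuclideanSpace ℝ (Fin d)) ×
      (ℝ × EuclideanSpace ℝ (Fin d)) =>
      gE d p.2.1 (x - p.1.1 - p.2.2) * gE d p.2.1 (p.2.2 - p.1.2))
      ((μ.prod ν).prod ((volume.restrict (Set.Ioi y)).prod volume)) := by
  have hm := measurable_quad d x
  refine ⟨hm.aestronglyMeasurable, ?_⟩
  obtain ⟨M, hM, h⟩ := lintegral_gE3 d hy
  unfold HasFiniteIntegral
  rw [lintegral_prod _ hm.enorm.aemeasurable]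
  refine lt_of_le_of_lt (lintegral_mono (g := fun _ => M) fun pq => ?_) ?_
  · have hm1 : Measurable (fun r : ℝ × EuclideanSpace ℝ (Fin d) =>
        gE d r.1 (x - pq.1 - r.2) * gE d r.1 (r.2 - pq.2)) :=
      hm.comp (measurable_prodMk_left (x := pq))
    simp only
    rw [lintegral_prod _ hm1.enorm.aemeasurable]
    exact h _ _
  · simpa using hM

noncomputable def fC {d : ℕ} (μ : Measure (EuclideanSpace ℝ (Fin d))) (v : ℝ)
    (x : EuclideanSpace ℝ (Fin d)) : ℝ := ∫ z, gE d v (x - z) ∂μ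

lemma measurable_fC {d : ℕ} (μ : Measure (EuclideanSpace ℝ (Fin d))) [IsProbabilityMeasure μ] :
    Measurable (fun r : ℝ × EuclideanSpace ℝ (Fin d) => fC μ r.1 r.2) := by
  unfold fC
  have : Measurable (fun s : (ℝ × EuclideanSpace ℝ (Fin d)) × EuclideanSpace ℝ (Fin d) =>
      gE d s.1.1 (s.1.2 - s.2)) :=
    (measurable_gE d).comp (f := fun s : (ℝ × EuclideanSpace ℝ (Fin d)) × EuclideanSpace ℝ (Fin d) =>
      (s.1.1, s.1.2 - s.2)) (by fun_prop)
  exact (this.stronglyMeasurable.integral_prod_right' (ν := μ)).measurable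

lemma measurable_fC_right {d : ℕ} (μ : Measure (EuclideanSpace ℝ (Fin d)))
    [IsProbabilityMeasure μ] (v : ℝ) : Measurable (fC μ v) :=
  (measurable_fC μ).comp measurable_prodMk_left

lemma conv_eq {d : ℕ} (μ ν : Measure (EuclideanSpace ℝ (Fin d)))
    [IsProbabilityMeasure μ] [IsProbabilityMeasure ν] {y : ℝ} (hy : 0 < y)
    (x : EuclideanSpace ℝ (Fin d)) :
    fC (μ ∗ ν) y x = -2 * ∫ r : ℝ × EuclideanSpace ℝ (Fin d), fC μ r.1 (x - r.2) * fC ν r.1 r.2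
      ∂((volume.restrict (Set.Ioi (y / 2))).prod volume) := by
  have hint : Integrable (fun z => gE d y (x - z)) (μ ∗ ν) := by
    refine Integrable.of_bound (C := sB d y) ?_ (Eventually.of_forall fun z => gE_le_sB d hy _)
    exact ((measurable_gE_right d y).comp (by fun_prop : Measurable fun z => x - z)).aestronglyMeasurable
  have hq := integrable_quad μ ν (half_pos hy) x
  have hq1 := hq.integral_prod_left
  unfold fC
  rw [integral_conv hint]
  simp_rw [key d hy, integral_const_mul]
  congr 1
  rw [integral_integral (f := fun p q => ∫ r : ℝ × EuclideanSpace ℝ (Fin d),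
      gE d r.1 (x - p - r.2) * gE d r.1 (r.2 - q)
      ∂((volume.restrict (Set.Ioi (y / 2))).prod volume)) hq1,
    integral_integral_swap (f := fun (pq : EuclideanSpace ℝ (Fin d) × EuclideanSpace ℝ (Fin d))
      (r : ℝ × EuclideanSpace ℝ (Fin d)) =>
      gE d r.1 (x - pq.1 - r.2) * gE d r.1 (r.2 - pq.2)) hq]
  congr 1
  ext r
  rw [integral_prod_mul (fun p => gE d r.1 (x - p - r.2)) (fun q => gE d r.1 (r.2 - q))]
  simp_rw [sub_right_comm]

lemma lintegral_fC {d : ℕ} (μ : Measure (EuclideanSpace ℝ (Fin d))) [IsProbabilityMeasure μ]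
    {v : ℝ} (hv : 0 < v) : ∫⁻ x, ‖fC μ v x‖ₑ ≤ ENNReal.ofReal (cC d / v) := by
  have hm : Measurable (fun s : EuclideanSpace ℝ (Fin d) × EuclideanSpace ℝ (Fin d) =>
      gE d v (s.1 - s.2)) :=
    (measurable_gE_right d v).comp (by fun_prop)
  calc _ ≤ ∫⁻ x, ∫⁻ z, ‖gE d v (x - z)‖ₑ ∂μ :=
        lintegral_mono fun x => enorm_integral_le_lintegral_enorm _
    _ = ∫⁻ z, (∫⁻ x, ‖gE d v (x - z)‖ₑ) ∂μ := lintegral_lintegral_swap hm.enorm.aemeasurable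
    _ ≤ ∫⁻ z, ENNReal.ofReal (cC d / v) ∂μ := by
        apply lintegral_mono
        intro z
        simp only
        rw [lintegral_sub_right_eq_self (fun x => ‖gE d v x‖ₑ)]
        exact lintegral_gE d hv
    _ = _ := by simp

lemma main_lintegral {d : ℕ} (μ ν : Measure (EuclideanSpace ℝ (Fin d)))
    [IsProbabilityMeasure μ] [IsProbabilityMeasure ν] {y : ℝ} (hy : 0 < y) :
    ∫⁻ x, ‖fC (μ ∗ ν) y x‖ₑ ≤
      2 * ∫⁻ v in Set.Ioi (y / 2), (∫⁻ x, ‖fC μ v x‖ₑ) * (∫⁻ x, ‖fC ν v x‖ₑ) := by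
  have hm : Measurable (fun s : EuclideanSpace ℝ (Fin d) × (ℝ × EuclideanSpace ℝ (Fin d)) =>
      ‖fC μ s.2.1 (s.1 - s.2.2) * fC ν s.2.1 s.2.2‖ₑ) := by
    refine (Measurable.mul ?_ ?_).enorm
    · exact (measurable_fC μ).comp (f := fun s : EuclideanSpace ℝ (Fin d) ×
        (ℝ × EuclideanSpace ℝ (Fin d)) => (s.2.1, s.1 - s.2.2)) (by fun_prop)
    · exact (measurable_fC ν).comp measurable_snd
  have hm2 : Measurable (fun r : ℝ × EuclideanSpace ℝ (Fin d) =>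
      (∫⁻ x, ‖fC μ r.1 x‖ₑ) * ‖fC ν r.1 r.2‖ₑ) :=
    ((measurable_fC μ).enorm.lintegral_prod_right'.comp measurable_fst).mul
      (measurable_fC ν).enorm
  calc _ ≤ ∫⁻ x, 2 * ∫⁻ r : ℝ × EuclideanSpace ℝ (Fin d),
        ‖fC μ r.1 (x - r.2) * fC ν r.1 r.2‖ₑ
        ∂((volume.restrict (Set.Ioi (y / 2))).prod volume) := by
        apply lintegral_mono
        intro x
        simp only
        rw [conv_eq μ ν hy, enorm_mul]
        have : ‖(-2 : ℝ)‖ₑ = 2 := by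
          rw [Real.enorm_eq_ofReal_abs]; norm_num
        rw [this]
        gcongr
        exact enorm_integral_le_lintegral_enorm _
    _ = 2 * ∫⁻ r : ℝ × EuclideanSpace ℝ (Fin d), (∫⁻ x, ‖fC μ r.1 (x - r.2) * fC ν r.1 r.2‖ₑ)
        ∂((volume.restrict (Set.Ioi (y / 2))).prod volume) := by
        rw [lintegral_const_mul' _ _ (by norm_num), lintegral_lintegral_swap hm.aemeasurable]
    _ = 2 * ∫⁻ r : ℝ × EuclideanSpace ℝ (Fin d), (∫⁻ x, ‖fC μ r.1 x‖ₑ) * ‖fC ν r.1 r.2‖ₑ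
        ∂((volume.restrict (Set.Ioi (y / 2))).prod volume) := by
        congr 1
        apply lintegral_congr
        intro r
        simp_rw [enorm_mul]
        rw [lintegral_mul_const' _ _ enorm_ne_top,
          lintegral_sub_right_eq_self (fun x => ‖fC μ r.1 x‖ₑ)]
    _ = _ := by
        rw [lintegral_prod _ hm2.aemeasurable]
        congr 1
        apply lintegral_congr
        intro v
        simp only
        rw [lintegral_const_mul _ (measurable_fC_right ν v).enorm]

theorem statement7 {d : ℕ} (μ ν : Measure (EuclideanSpace ℝ (Fin d)))
    [IsProbabilityMeasure μ] [IsProbabilityMeasure ν] (y : ℝ) (hy : 0 < y) :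
    ∫ x, |∫ z, gaussDy d y (x - z) ∂(μ ∗ ν)| ≤
      2 * ∫ v in Set.Ioi (y / 2),
        (∫ x, |∫ z, gaussDy d v (x - z) ∂μ|) * (∫ x, |∫ z, gaussDy d v (x - z) ∂ν|) := by
  have hN : ∀ (ρ : Measure (EuclideanSpace ℝ (Fin d))) [IsProbabilityMeasure ρ] (v : ℝ), 0 < v →
      ∫ x, |∫ z, gaussDy d v (x - z) ∂ρ| = (∫⁻ x, ‖fC ρ v x‖ₑ).toReal := by
    intro ρ _ v hv
    simp_rw [gaussDy_eq d hv]
    exact integral_norm_eq_lintegral_enorm (measurable_fC_right ρ v).aestronglyMeasurable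
  have hpos : ∀ v ∈ Set.Ioi (y / 2), 0 < v := fun v hv => (half_pos hy).trans hv
  have hR : ∫ v in Set.Ioi (y / 2),
        (∫ x, |∫ z, gaussDy d v (x - z) ∂μ|) * (∫ x, |∫ z, gaussDy d v (x - z) ∂ν|)
      = (∫⁻ v in Set.Ioi (y / 2), (∫⁻ x, ‖fC μ v x‖ₑ) * (∫⁻ x, ‖fC ν v x‖ₑ)).toReal := by
    rw [← integral_toReal]
    · apply setIntegral_congr_fun measurableSet_Ioi
      intro v hv
      simp only
      rw [hN μ v (hpos v hv), hN ν v (hpos v hv), ENNReal.toReal_mul]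
    · exact ((measurable_fC μ).enorm.lintegral_prod_right'.mul
        (measurable_fC ν).enorm.lintegral_prod_right').aemeasurable
    · refine (ae_restrict_iff' measurableSet_Ioi).2 (Eventually.of_forall fun v hv => ?_)
      exact ENNReal.mul_lt_top ((lintegral_fC μ (hpos v hv)).trans_lt ENNReal.ofReal_lt_top)
        ((lintegral_fC ν (hpos v hv)).trans_lt ENNReal.ofReal_lt_top)
  have hfin : ∫⁻ v in Set.Ioi (y / 2), (∫⁻ x, ‖fC μ v x‖ₑ) * (∫⁻ x, ‖fC ν v x‖ₑ) < ⊤ := by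
    refine lt_of_le_of_lt (setLIntegral_mono' measurableSet_Ioi fun v hv => ?_)
      (lintegral_tail (cC d) (cC_nonneg d) (half_pos hy))
    rw [ENNReal.ofReal_mul (div_nonneg (cC_nonneg d) (hpos v hv).le)]
    exact mul_le_mul' (lintegral_fC μ (hpos v hv)) (lintegral_fC ν (hpos v hv))
  rw [hR, hN (μ ∗ ν) y hy]
  have := ENNReal.toReal_mono (ENNReal.mul_lt_top (by norm_num) hfin).ne (main_lintegral μ ν hy)
  simpa [ENNReal.toReal_mul] using this
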